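/- For 2×2 Hermitian PSD matrices S_R, S_E such that S_R − S_E has a positive eigenvalue, the maximum of C_s(Q) = log det(I + QS_R) − log det(I + QS_E) over Q ⪰ 0, Tr(Q) ≤ 1 is attained at some Q* with Tr(Q*) = 1. -/

import Mathlib

open Matrix
open scoped ComplexOrder

/-!
Adding a beam `s • v v*` to the covariance `Q` multiplies `det (1 + Q S)` by `1 + s v* Γ v`, where
`Γ = S (1 + Q S)⁻¹`. Hence spare power costs nothing as soon as some `v ≠ 0` satisfies
`v* Γ_E v ≤ v* Γ_R v`. Take `v = (1 + Q S_R) w` for a vector `w` with `w* S_E w ≤ w* S_R w`. Since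
`v* Γ v` is the minimum of `w* S w + r* Q r` over all splittings `v = w + Q r`, attained when
`r = S w`, the splitting optimal for `S_R` also bounds the form of `Γ_E`:
`v* Γ_E v ≤ w* S_E w + (S_R w)* Q (S_R w) ≤ v* Γ_R v`.
So every feasible `Q` is dominated by one on the slice of full trace, which is compact.
-/

lemma star_mulVec_dotProduct {m n R : Type*} [Fintype m] [Fintype n] [NonUnitalSemiring R]
    [StarRing R] (M : Matrix m n R) (x : n → R) (y : m → R) :
    star (M *ᵥ x) ⬝ᵥ y = star x ⬝ᵥ (Mᴴ *ᵥ y) := by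
  rw [star_mulVec, dotProduct_mulVec]

section EffectiveGram

variable {n R : Type*} [Fintype n] [DecidableEq n] [CommRing R]

/-- The Gram matrix `S (1 + Q S)⁻¹` of a channel as seen by an additional beam when a signal of
covariance `Q` is already being transmitted. If `S = Hᴴ H`, it equals `Hᴴ (1 + H Q Hᴴ)⁻¹ H`: the
signal already sent acts as coloured noise. -/
noncomputable def effectiveGram (S Q : Matrix n n R) : Matrix n n R :=
  S * (1 + Q * S)⁻¹

lemma effectiveGram_mulVec_mulVec {S Q : Matrix n n R} (h : IsUnit (1 + Q * S).det) (w : n → R) :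
    effectiveGram S Q *ᵥ ((1 + Q * S) *ᵥ w) = S *ᵥ w := by
  rw [mulVec_mulVec, effectiveGram, Matrix.mul_assoc, nonsing_inv_mul _ h, Matrix.mul_one]

lemma det_one_add_add_vecMulVec_mul {S Q : Matrix n n R} (h : IsUnit (1 + Q * S).det)
    (v z : n → R) :
    (1 + (Q + vecMulVec v z) * S).det =
      (1 + Q * S).det * (1 + z ⬝ᵥ (effectiveGram S Q *ᵥ v)) := by
  have hfactor : 1 + (Q + vecMulVec v z) * S =
      (1 + Q * S) * (1 + vecMulVec ((1 + Q * S)⁻¹ *ᵥ v) (z ᵥ* S)) := by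
    rw [Matrix.mul_add, Matrix.mul_one, mul_vecMulVec, mulVec_mulVec, mul_nonsing_inv _ h,
      one_mulVec, Matrix.add_mul, vecMulVec_mul, add_assoc]
  rw [hfactor, det_mul, vecMulVec_eq Unit, det_one_add_replicateCol_mul_replicateRow,
    ← dotProduct_mulVec, mulVec_mulVec, effectiveGram]

lemma dotProduct_effectiveGram_mulVec [StarRing R] {S Q : Matrix n n R} (hQ : Q.IsHermitian)
    (h : IsUnit (1 + Q * S).det) (w : n → R) :
    star ((1 + Q * S) *ᵥ w) ⬝ᵥ (effectiveGram S Q *ᵥ ((1 + Q * S) *ᵥ w)) =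
      star w ⬝ᵥ (S *ᵥ w) + star (S *ᵥ w) ⬝ᵥ (Q *ᵥ (S *ᵥ w)) := by
  rw [effectiveGram_mulVec_mulVec h, add_mulVec, one_mulVec, ← mulVec_mulVec, star_add,
    add_dotProduct, star_mulVec_dotProduct Q, hQ.eq]

end EffectiveGram

section PosSemidef

variable {n 𝕜 : Type*} [Fintype n] [RCLike 𝕜] {S S_R S_E Q : Matrix n n 𝕜}

lemma exists_eq_conjTranspose_mul_self (hQ : Q.PosSemidef) : ∃ B : Matrix n n 𝕜, Q = Bᴴ * B := by
  classical
  open scoped MatrixOrder in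
  exact CStarAlgebra.nonneg_iff_eq_star_mul_self.mp hQ.nonneg

open scoped Matrix.Norms.Frobenius in
lemma trace_conjTranspose_mul_self_eq_norm_sq {m : Type*} [Fintype m] (B : Matrix m n 𝕜) :
    (Bᴴ * B).trace = ((‖B‖ ^ 2 : ℝ) : 𝕜) := by
  have hnorm : ‖B‖ ^ 2 = ∑ i, ∑ j, ‖B i j‖ ^ 2 := by
    rw [frobenius_norm_def, ← Real.sqrt_eq_rpow, Real.sq_sqrt (by positivity)]
    simp only [Real.rpow_two]
  rw [hnorm, Finset.sum_comm]
  simp [trace, mul_apply, RCLike.conj_mul]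

open scoped Matrix.Norms.Frobenius in
lemma isCompact_setOf_posSemidef_trace_eq (P : ℝ) :
    IsCompact {Q : Matrix n n 𝕜 | Q.PosSemidef ∧ Q.trace = P} := by
  have hfactors : IsCompact {B : Matrix n n 𝕜 | (Bᴴ * B).trace = P} := by
    have : ProperSpace (Matrix n n 𝕜) := FiniteDimensional.proper 𝕜 _
    refine (isCompact_closedBall (0 : Matrix n n 𝕜) √P).of_isClosed_subset
      (isClosed_eq (by fun_prop) continuous_const) fun B hB ↦ ?_
    have hnorm : ‖B‖ ^ 2 = P := by
      exact_mod_cast (trace_conjTranspose_mul_self_eq_norm_sq B).symm.trans hB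
    exact mem_closedBall_zero_iff.mpr (Real.le_sqrt_of_sq_le hnorm.le)
  convert hfactors.image (f := fun B ↦ Bᴴ * B) (by fun_prop) using 1
  ext Q
  constructor
  · rintro ⟨hQ, htr⟩
    obtain ⟨B, rfl⟩ := exists_eq_conjTranspose_mul_self hQ
    exact ⟨B, htr, rfl⟩
  · rintro ⟨B, htr, rfl⟩
    exact ⟨posSemidef_conjTranspose_mul_self B, htr⟩

lemma exists_trace_add_smul_vecMulVec_eq (hQ : Q.IsHermitian) {v : n → 𝕜} (hv : v ≠ 0) {P : ℝ}
    (hP : RCLike.re Q.trace ≤ P) :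
    ∃ s : ℝ, 0 ≤ s ∧ (Q + s • vecMulVec v (star v)).trace = P := by
  obtain ⟨t, ht⟩ : ∃ t : ℝ, Q.trace = t :=
    RCLike.conj_eq_iff_real.mp (by rw [starRingEnd_apply, ← trace_conjTranspose, hQ.eq])
  obtain ⟨c, hc, hvc⟩ := RCLike.pos_iff_exists_ofReal.mp (dotProduct_star_self_pos_iff.mpr hv)
  rw [ht, RCLike.ofReal_re] at hP
  refine ⟨(P - t) / c, div_nonneg (sub_nonneg.mpr hP) hc.le, ?_⟩
  rw [trace_add, trace_smul, trace_vecMulVec, dotProduct_comm, ht, ← hvc,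
    RCLike.real_smul_eq_coe_mul, ← RCLike.ofReal_mul, ← RCLike.ofReal_add,
    div_mul_cancel₀ _ hc.ne', add_sub_cancel]

variable [DecidableEq n]

lemma dotProduct_mulVec_eigenvectorBasis {M : Matrix n n 𝕜} (hM : M.IsHermitian) (i : n) :
    star ⇑(hM.eigenvectorBasis i) ⬝ᵥ (M *ᵥ ⇑(hM.eigenvectorBasis i)) = (hM.eigenvalues i : 𝕜) :=
  RCLike.ext (by simp [hM.eigenvalues_eq]) (by simp [hM.im_star_dotProduct_mulVec_self])

lemma det_one_add_mul_pos (hS : S.PosSemidef) (hQ : Q.PosSemidef) : 0 < (1 + Q * S).det := by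
  obtain ⟨B, rfl⟩ := exists_eq_conjTranspose_mul_self hQ
  rw [Matrix.mul_assoc, det_one_add_mul_comm]
  exact (PosDef.one.add_posSemidef (hS.mul_mul_conjTranspose_same B)).det_pos

lemma isUnit_det_one_add_mul (hS : S.PosSemidef) (hQ : Q.PosSemidef) : IsUnit (1 + Q * S).det :=
  (det_one_add_mul_pos hS hQ).ne'.isUnit

lemma mulVec_one_add_mul_surjective (hS : S.PosSemidef) (hQ : Q.PosSemidef) :
    Function.Surjective (1 + Q * S).mulVec :=
  mulVec_surjective_iff_isUnit.mpr
    ((isUnit_iff_isUnit_det _).mpr (isUnit_det_one_add_mul hS hQ))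

lemma dotProduct_effectiveGram_mulVec_nonneg (hS : S.PosSemidef) (hQ : Q.PosSemidef) (v : n → 𝕜) :
    0 ≤ star v ⬝ᵥ (effectiveGram S Q *ᵥ v) := by
  obtain ⟨w, rfl⟩ := mulVec_one_add_mul_surjective hS hQ v
  rw [dotProduct_effectiveGram_mulVec hQ.isHermitian (isUnit_det_one_add_mul hS hQ)]
  exact add_nonneg (hS.dotProduct_mulVec_nonneg w) (hQ.dotProduct_mulVec_nonneg _)

lemma dotProduct_effectiveGram_mulVec_le (hS : S.PosSemidef) (hQ : Q.PosSemidef) (w r : n → 𝕜) :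
    star (w + Q *ᵥ r) ⬝ᵥ (effectiveGram S Q *ᵥ (w + Q *ᵥ r)) ≤
      star w ⬝ᵥ (S *ᵥ w) + star r ⬝ᵥ (Q *ᵥ r) := by
  obtain ⟨u, hu⟩ := mulVec_one_add_mul_surjective hS hQ (w + Q *ᵥ r)
  -- The splitting `w + Q r` differs from the optimal one, `u + Q (S u)`, by a vector `d`.
  obtain ⟨d, rfl⟩ : ∃ d, r = S *ᵥ u - d := ⟨S *ᵥ u - r, by rw [sub_sub_cancel]⟩
  obtain rfl : w = u + Q *ᵥ d := by
    rw [add_mulVec, one_mulVec, ← mulVec_mulVec, mulVec_sub] at hu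
    linear_combination -hu
  have hgap : star (u + Q *ᵥ d) ⬝ᵥ (S *ᵥ (u + Q *ᵥ d)) +
        star (S *ᵥ u - d) ⬝ᵥ (Q *ᵥ (S *ᵥ u - d)) =
      (star u ⬝ᵥ (S *ᵥ u) + star (S *ᵥ u) ⬝ᵥ (Q *ᵥ (S *ᵥ u))) +
        (star (Q *ᵥ d) ⬝ᵥ (S *ᵥ (Q *ᵥ d)) + star d ⬝ᵥ (Q *ᵥ d)) := by
    simp only [star_add, star_sub, add_dotProduct, sub_dotProduct, mulVec_add, mulVec_sub,
      dotProduct_add, dotProduct_sub, star_mulVec_dotProduct, hQ.isHermitian.eq,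
      hS.isHermitian.eq]
    ring
  rw [← hu, dotProduct_effectiveGram_mulVec hQ.isHermitian (isUnit_det_one_add_mul hS hQ), hgap]
  exact le_add_of_nonneg_right
    (add_nonneg (hS.dotProduct_mulVec_nonneg _) (hQ.dotProduct_mulVec_nonneg d))

lemma dotProduct_effectiveGram_mulVec_le_of_dotProduct_mulVec_le (hE : S_E.PosSemidef)
    (hR : S_R.PosSemidef) (hQ : Q.PosSemidef) {w : n → 𝕜}
    (hw : star w ⬝ᵥ (S_E *ᵥ w) ≤ star w ⬝ᵥ (S_R *ᵥ w)) :
    star ((1 + Q * S_R) *ᵥ w) ⬝ᵥ (effectiveGram S_E Q *ᵥ ((1 + Q * S_R) *ᵥ w)) ≤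
      star ((1 + Q * S_R) *ᵥ w) ⬝ᵥ (effectiveGram S_R Q *ᵥ ((1 + Q * S_R) *ᵥ w)) := by
  rw [dotProduct_effectiveGram_mulVec hQ.isHermitian (isUnit_det_one_add_mul hR hQ),
    add_mulVec, one_mulVec, ← mulVec_mulVec]
  grw [dotProduct_effectiveGram_mulVec_le hE hQ, hw]

end PosSemidef

section Rate

variable {n 𝕜 : Type*} [Fintype n] [DecidableEq n] [RCLike 𝕜] {S S_R S_E Q : Matrix n n 𝕜}

/-- The rate `log det (1 + Q S)` of a Gaussian channel with Gram matrix `S` under the input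
covariance `Q`. For positive semidefinite `S` and `Q` the determinant is a positive element of `𝕜`,
so that taking its real part loses nothing. -/
noncomputable def channelRate (S Q : Matrix n n 𝕜) : ℝ :=
  Real.log (RCLike.re (1 + Q * S).det)

/-- The secrecy rate `C_s(Q)`: the excess of the rate of the legitimate receiver, with Gram matrix
`S_R`, over the rate of the eavesdropper, with Gram matrix `S_E`. -/
noncomputable def secrecyRate (S_R S_E Q : Matrix n n 𝕜) : ℝ :=
  channelRate S_R Q - channelRate S_E Q

lemma continuousOn_channelRate (hS : S.PosSemidef) :
    ContinuousOn (channelRate S) {Q | Q.PosSemidef} := by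
  refine ContinuousOn.log (by fun_prop) fun Q hQ ↦ ?_
  exact (RCLike.pos_iff.mp (det_one_add_mul_pos hS hQ)).1.ne'

lemma channelRate_add_smul_vecMulVec (hS : S.PosSemidef) (hQ : Q.PosSemidef) {s : ℝ} (hs : 0 ≤ s)
    (v : n → 𝕜) :
    channelRate S (Q + s • vecMulVec v (star v)) =
      channelRate S Q + Real.log (1 + s * RCLike.re (star v ⬝ᵥ (effectiveGram S Q *ᵥ v))) := by
  obtain ⟨d, hd, hdet⟩ := RCLike.pos_iff_exists_ofReal.mp (det_one_add_mul_pos hS hQ)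
  obtain ⟨g, hg, hform⟩ := RCLike.nonneg_iff_exists_ofReal.mp
    (dotProduct_effectiveGram_mulVec_nonneg hS hQ v)
  have hdet' : (1 + (Q + s • vecMulVec v (star v)) * S).det = ((d * (1 + s * g) : ℝ) : 𝕜) := by
    rw [← smul_vecMulVec, det_one_add_add_vecMulVec_mul (isUnit_det_one_add_mul hS hQ),
      mulVec_smul, dotProduct_smul, ← hdet, ← hform, RCLike.real_smul_eq_coe_mul]
    simp only [RCLike.ofReal_mul, RCLike.ofReal_add, RCLike.ofReal_one]
  rw [channelRate, channelRate, hdet', ← hdet, ← hform, RCLike.ofReal_re, RCLike.ofReal_re,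
    RCLike.ofReal_re, Real.log_mul hd.ne' (by positivity)]

lemma secrecyRate_le_secrecyRate_add_smul_vecMulVec (hR : S_R.PosSemidef) (hE : S_E.PosSemidef)
    (hQ : Q.PosSemidef) {s : ℝ} (hs : 0 ≤ s) {v : n → 𝕜}
    (hv : star v ⬝ᵥ (effectiveGram S_E Q *ᵥ v) ≤ star v ⬝ᵥ (effectiveGram S_R Q *ᵥ v)) :
    secrecyRate S_R S_E Q ≤ secrecyRate S_R S_E (Q + s • vecMulVec v (star v)) := by
  have hE₀ := (RCLike.nonneg_iff.mp (dotProduct_effectiveGram_mulVec_nonneg hE hQ v)).1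
  have hgain : Real.log (1 + s * RCLike.re (star v ⬝ᵥ (effectiveGram S_E Q *ᵥ v))) ≤
      Real.log (1 + s * RCLike.re (star v ⬝ᵥ (effectiveGram S_R Q *ᵥ v))) := by
    gcongr
  rw [secrecyRate, secrecyRate, channelRate_add_smul_vecMulVec hR hQ hs,
    channelRate_add_smul_vecMulVec hE hQ hs]
  linarith

lemma exists_trace_eq_secrecyRate_le (hR : S_R.PosSemidef) (hE : S_E.PosSemidef)
    {w : n → 𝕜} (hw₀ : w ≠ 0) (hw : star w ⬝ᵥ (S_E *ᵥ w) ≤ star w ⬝ᵥ (S_R *ᵥ w))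
    (hQ : Q.PosSemidef) {P : ℝ} (hP : RCLike.re Q.trace ≤ P) :
    ∃ Q' : Matrix n n 𝕜, (Q'.PosSemidef ∧ Q'.trace = P) ∧
      secrecyRate S_R S_E Q ≤ secrecyRate S_R S_E Q' := by
  have hv : (1 + Q * S_R) *ᵥ w ≠ 0 := fun h ↦
    hw₀ (eq_zero_of_mulVec_eq_zero (det_one_add_mul_pos hR hQ).ne' h)
  obtain ⟨s, hs, htr⟩ := exists_trace_add_smul_vecMulVec_eq hQ.isHermitian hv hP
  exact ⟨_, ⟨hQ.add ((posSemidef_vecMulVec_self_star _).smul hs), htr⟩,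
    secrecyRate_le_secrecyRate_add_smul_vecMulVec hR hE hQ hs
      (dotProduct_effectiveGram_mulVec_le_of_dotProduct_mulVec_le hE hR hQ hw)⟩

theorem stmt_16_general (hR : S_R.PosSemidef) (hE : S_E.PosSemidef)
    (hnonneg : ∃ i, 0 ≤ (hR.isHermitian.sub hE.isHermitian).eigenvalues i) {P : ℝ} (hP : 0 ≤ P) :
    ∃ Qs : Matrix n n 𝕜, Qs.PosSemidef ∧ Qs.trace = P ∧
      ∀ Q : Matrix n n 𝕜, Q.PosSemidef → RCLike.re Q.trace ≤ P →
        secrecyRate S_R S_E Q ≤ secrecyRate S_R S_E Qs := by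
  obtain ⟨i, hi⟩ := hnonneg
  set hD := hR.isHermitian.sub hE.isHermitian
  set w : n → 𝕜 := ⇑(hD.eigenvectorBasis i)
  have hw₀ : w ≠ 0 := fun h ↦
    hD.eigenvectorBasis.orthonormal.ne_zero i (by ext j; exact congrFun h j)
  have hw : star w ⬝ᵥ (S_E *ᵥ w) ≤ star w ⬝ᵥ (S_R *ᵥ w) := by
    rw [← sub_nonneg, ← dotProduct_sub, ← sub_mulVec, dotProduct_mulVec_eigenvectorBasis]
    exact RCLike.ofReal_nonneg.mpr hi
  obtain ⟨Q₀, hQ₀, -⟩ :=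
    exists_trace_eq_secrecyRate_le hR hE hw₀ hw PosSemidef.zero (P := P) (by simpa using hP)
  have hcont : ContinuousOn (secrecyRate S_R S_E) {Q | Q.PosSemidef ∧ Q.trace = P} :=
    ((continuousOn_channelRate hR).sub (continuousOn_channelRate hE)).mono fun _ hQ ↦ hQ.1
  obtain ⟨Qs, ⟨hQs, htr⟩, hmax⟩ :=
    (isCompact_setOf_posSemidef_trace_eq P).exists_isMaxOn ⟨Q₀, hQ₀⟩ hcont
  refine ⟨Qs, hQs, htr, fun Q hQ hQP ↦ ?_⟩
  obtain ⟨Q', hQ', hle⟩ := exists_trace_eq_secrecyRate_le hR hE hw₀ hw hQ hQP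
  exact hle.trans (hmax hQ')

end Rate

theorem stmt_16 (S_R S_E : Matrix (Fin 2) (Fin 2) ℂ)
    (hR : S_R.PosSemidef) (hE : S_E.PosSemidef)
    (hpos : ∃ i, 0 < (hR.isHermitian.sub hE.isHermitian).eigenvalues i) :
    ∃ Qs : Matrix (Fin 2) (Fin 2) ℂ, Qs.PosSemidef ∧ Qs.trace = 1 ∧
      ∀ Q : Matrix (Fin 2) (Fin 2) ℂ, Q.PosSemidef → Q.trace.re ≤ 1 →
        Real.log ((1 + Q * S_R).det.re) - Real.log ((1 + Q * S_E).det.re)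
          ≤ Real.log ((1 + Qs * S_R).det.re) - Real.log ((1 + Qs * S_E).det.re) := by
  simpa only [secrecyRate, channelRate, RCLike.ofReal_one, RCLike.re_eq_complex_re] using
    stmt_16_general hR hE (hpos.imp fun _ ↦ le_of_lt) zero_le_one
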